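/- Assume full information: there is a finite set 𝒵 and random variables Z_t : Ω → 𝒵 such that 𝒴 = 𝒜 × 𝒵 and Y_{t,a} = (a, Z_t) for every t ≥ 1 and a ∈ 𝒜. Then the expected regret of Thompson sampling satisfies Σ_{t=1}^{T} E[ R(Y_{t,A*}) − R(Y_{t,A_t}) ] ≤ √( H(A*) · T / 2 ). -/

import Mathlib

open MeasureTheory ProbabilityTheory Real

/-- Shannon entropy of a random variable `X` with values in a finite set,
under the measure `μ`. -/
noncomputable def entropy {Ω : Type*} [MeasurableSpace Ω] (μ : Measure Ω)
    {𝒳 : Type*} [Fintype 𝒳] (X : Ω → 𝒳) : ℝ :=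
  ∑ x : 𝒳, Real.negMulLog (μ {ω | X ω = x}).toReal

/-! Given the history, the sampled action `A_t` is a copy of `A*` independent of `Z_t`. Hence the
conditional regret of step `t` compares the expectation of `R` under the joint law of `A*` and
`(A_t, Z_t)` with its expectation under the product of the marginals, and by Pinsker's inequality
its square is at most half the information that step `t` reveals about `A*`. These information
gains telescope to at most `H(A*)`, and Cauchy–Schwarz over `t` gives the bound. -/

section KullbackLeibler

open InformationTheory

variable {α : Type*} [MeasurableSpace α] {μ ν : Measure α}

theorem integral_le_toReal_klDiv_add_log_integral_exp [IsProbabilityMeasure μ]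
    [IsProbabilityMeasure ν] (hμν : klDiv μ ν ≠ ⊤) {f : α → ℝ} (hfμ : Integrable f μ)
    (hfν : Integrable (fun x ↦ exp (f x)) ν) :
    ∫ x, f x ∂μ ≤ (klDiv μ ν).toReal + log (∫ x, exp (f x) ∂ν) := by
  obtain ⟨hac, hint⟩ := klDiv_ne_top_iff.1 hμν
  have := isProbabilityMeasure_tilted hfν
  have hac' : μ ≪ ν.tilted f := hac.trans (absolutelyContinuous_tilted hfν)
  have hgibbs : 0 ≤ ∫ x, llr μ (ν.tilted f) x ∂μ := by
    rw [← toReal_klDiv_of_measure_eq hac' (by simp only [measure_univ])]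
    exact ENNReal.toReal_nonneg
  rw [integral_llr_tilted_right hac hfμ hfν hint,
    ← toReal_klDiv_of_measure_eq hac (by simp only [measure_univ])] at hgibbs
  linarith

theorem sq_integral_sub_integral_le_of_hasSubgaussianMGF [IsProbabilityMeasure μ]
    [IsProbabilityMeasure ν] (hμν : klDiv μ ν ≠ ⊤) {f : α → ℝ} (hfμ : Integrable f μ) {c : NNReal}
    (hf : HasSubgaussianMGF (fun x ↦ f x - ∫ y, f y ∂ν) c ν) :
    (∫ x, f x ∂μ - ∫ x, f x ∂ν) ^ 2 ≤ 2 * c * (klDiv μ ν).toReal := by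
  set d := ∫ x, f x ∂μ - ∫ x, f x ∂ν with hd
  have hquad (l : ℝ) : 0 ≤ c / 2 * (l * l) + (-d) * l + (klDiv μ ν).toReal := by
    have hDV := integral_le_toReal_klDiv_add_log_integral_exp hμν
      (f := fun x ↦ l * (f x - ∫ y, f y ∂ν)) ((hfμ.sub (integrable_const _)).const_mul l)
      (hf.integrable_exp_mul l)
    have hcgf := hf.cgf_le l
    rw [integral_const_mul, integral_sub hfμ (integrable_const _), integral_const,
      probReal_univ, one_smul, ← hd] at hDV
    rw [cgf, mgf] at hcgf
    linarith
  -- Optimising over `l` through the discriminant also covers `c = 0`.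
  have := discrim_le_zero hquad
  rw [discrim] at this
  linarith

theorem sq_integral_sub_integral_le_toReal_klDiv [IsProbabilityMeasure μ]
    [IsProbabilityMeasure ν] (hμν : klDiv μ ν ≠ ⊤) {f : α → ℝ} (hf : Measurable f) {a b : ℝ}
    (hfab : ∀ x, f x ∈ Set.Icc a b) :
    (∫ x, f x ∂μ - ∫ x, f x ∂ν) ^ 2 ≤ (b - a) ^ 2 / 2 * (klDiv μ ν).toReal := by
  have hoeffding : HasSubgaussianMGF (fun x ↦ f x - ∫ y, f y ∂ν) ((‖b - a‖₊ / 2) ^ 2) ν :=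
    hasSubgaussianMGF_of_mem_Icc hf.aemeasurable (.of_forall hfab)
  refine (sq_integral_sub_integral_le_of_hasSubgaussianMGF hμν
    (.of_mem_Icc a b hf.aemeasurable (.of_forall hfab)) hoeffding).trans_eq ?_
  simp only [NNReal.coe_pow, NNReal.coe_div, coe_nnnorm, norm_eq_abs, NNReal.coe_ofNat, div_pow,
    sq_abs]
  ring

theorem absolutelyContinuous_of_forall_singleton [Countable α]
    (h : ∀ x, ν {x} = 0 → μ {x} = 0) : μ ≪ ν := fun s hs ↦
  (measure_null_iff_singleton s.to_countable).2 fun x hx ↦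
    h x ((measure_null_iff_singleton s.to_countable).1 hs x hx)

theorem llr_ae_eq_log_measureReal_singleton_div [Countable α] [MeasurableSingletonClass α]
    [IsFiniteMeasure ν] (hμν : μ ≪ ν) :
    llr μ ν =ᵐ[μ] fun x ↦ log (μ.real {x} / ν.real {x}) := by
  refine ae_iff_of_countable.2 fun x hx ↦ ?_
  have hνx : ν {x} ≠ 0 := fun h ↦ hx (hμν h)
  have hdensity : μ {x} = μ.rnDeriv ν x * ν {x} := by
    conv_lhs => rw [← Measure.withDensity_rnDeriv_eq μ ν hμν]
    rw [withDensity_apply _ (measurableSet_singleton x), lintegral_singleton]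
  dsimp only
  rw [llr, measureReal_def, measureReal_def, ← ENNReal.toReal_div, hdensity,
    ENNReal.mul_div_cancel_right hνx (measure_ne_top ν _)]

end KullbackLeibler

section JointLaw

variable {Ω 𝒳 𝒴 : Type*} [MeasurableSpace Ω] {μ : Measure Ω} {X : Ω → 𝒳} {Y : Ω → 𝒴}
  [Countable 𝒳] [MeasurableSpace 𝒳] [MeasurableSingletonClass 𝒳]
  [Countable 𝒴] [MeasurableSpace 𝒴] [MeasurableSingletonClass 𝒴]

theorem map_prodMk_absolutelyContinuous_prod [IsFiniteMeasure μ] (hX : Measurable X)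
    (hY : Measurable Y) :
    μ.map (fun ω ↦ (X ω, Y ω)) ≪ (μ.map X).prod (μ.map Y) := by
  refine absolutelyContinuous_of_forall_singleton fun ⟨x, y⟩ h ↦ ?_
  rw [← Set.singleton_prod_singleton, Measure.prod_prod, mul_eq_zero,
    Measure.map_apply hX (measurableSet_singleton x),
    Measure.map_apply hY (measurableSet_singleton y)] at h
  rw [Measure.map_apply (hX.prodMk hY) (measurableSet_singleton _)]
  rcases h with h | h
  · exact measure_mono_null (fun ω hω ↦ congrArg Prod.fst hω) h
  · exact measure_mono_null (fun ω hω ↦ congrArg Prod.snd hω) h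

theorem llr_map_prodMk_prod_ae_eq [IsFiniteMeasure μ] (hX : Measurable X) (hY : Measurable Y) :
    llr (μ.map fun ω ↦ (X ω, Y ω)) ((μ.map X).prod (μ.map Y)) =ᵐ[μ.map fun ω ↦ (X ω, Y ω)]
      fun z ↦ log ((μ.map fun ω ↦ (X ω, Y ω)).real {z}) - log ((μ.map X).real {z.1}) -
        log ((μ.map Y).real {z.2}) := by
  have hac := map_prodMk_absolutelyContinuous_prod (μ := μ) hX hY
  refine (llr_ae_eq_log_measureReal_singleton_div hac).trans <|
    ae_iff_of_countable.2 fun ⟨x, y⟩ hxy ↦ ?_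
  have hprod : ((μ.map X).prod (μ.map Y)).real {(x, y)} ≠ 0 :=
    (measureReal_ne_zero_iff (measure_ne_top _ _)).2 fun h ↦ hxy (hac h)
  dsimp only
  rw [← Set.singleton_prod_singleton, measureReal_prod_prod] at hprod ⊢
  rw [log_div (by rwa [Set.singleton_prod_singleton, measureReal_ne_zero_iff]) hprod,
    log_mul (left_ne_zero_of_mul hprod) (right_ne_zero_of_mul hprod), sub_sub]

end JointLaw

section Entropy

open InformationTheory

variable {Ω 𝒳 𝒴 𝒵 : Type*} [MeasurableSpace Ω] [Fintype 𝒳] [Fintype 𝒴] [Fintype 𝒵]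
  {μ : Measure Ω} {X : Ω → 𝒳} {Y : Ω → 𝒴} {Z : Ω → 𝒵}

/-- The conditional entropy `H(X | Y) = ∑ y, ℙ(Y = y) H(X | Y = y)` of finite-valued random
variables. Null events `Y = y` contribute `0`. -/
noncomputable def condEntropy (μ : Measure Ω) (X : Ω → 𝒳) (Y : Ω → 𝒴) : ℝ :=
  ∑ y, μ.real (Y ⁻¹' {y}) * entropy μ[|Y ⁻¹' {y}] X

/-- The mutual information `I(X; Y)` of finite-valued random variables, in its entropy form
`H(X) + H(Y) - H(X, Y)`. -/
noncomputable def mutualInfo (μ : Measure Ω) (X : Ω → 𝒳) (Y : Ω → 𝒴) : ℝ :=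
  entropy μ X + entropy μ Y - entropy μ (fun ω ↦ (X ω, Y ω))

/-- The conditional mutual information `I(X; Y | Z) = ∑ z, ℙ(Z = z) I(X; Y | Z = z)` of
finite-valued random variables: the expected gain of information on `X` made by observing `Y` when
`Z` is already known. Null events `Z = z` contribute `0`. -/
noncomputable def condMutualInfo (μ : Measure Ω) (X : Ω → 𝒳) (Y : Ω → 𝒴) (Z : Ω → 𝒵) : ℝ :=
  ∑ z, μ.real (Z ⁻¹' {z}) * mutualInfo μ[|Z ⁻¹' {z}] X Y

theorem entropy_eq_sum_negMulLog : entropy μ X = ∑ x, negMulLog (μ.real (X ⁻¹' {x})) :=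
  rfl

theorem entropy_nonneg [IsZeroOrProbabilityMeasure μ] : 0 ≤ entropy μ X :=
  Finset.sum_nonneg fun _ _ ↦ negMulLog_nonneg measureReal_nonneg measureReal_le_one

theorem condEntropy_nonneg : 0 ≤ condEntropy μ X Y :=
  Finset.sum_nonneg fun _ _ ↦ mul_nonneg measureReal_nonneg entropy_nonneg

theorem entropy_equiv_comp (e : 𝒳 ≃ 𝒴) : entropy μ (fun ω ↦ e (X ω)) = entropy μ X := by
  simp only [entropy, ← e.sum_comp, e.apply_eq_iff_eq]

theorem condEntropy_equiv_comp_right (e : 𝒴 ≃ 𝒵) :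
    condEntropy μ X (fun ω ↦ e (Y ω)) = condEntropy μ X Y := by
  have hfiber (y : 𝒴) : (fun ω ↦ e (Y ω)) ⁻¹' {e y} = Y ⁻¹' {y} := by
    ext ω
    exact e.apply_eq_iff_eq
  simp only [condEntropy, ← e.sum_comp, hfiber]

theorem condEntropy_of_unique [IsProbabilityMeasure μ] [Unique 𝒴] :
    condEntropy μ X Y = entropy μ X := by
  have hfiber : Y ⁻¹' {default} = Set.univ := Set.eq_univ_of_forall fun ω ↦ Subsingleton.elim _ _
  rw [condEntropy, Fintype.sum_unique, hfiber, probReal_univ, cond_univ, one_mul]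

variable [MeasurableSpace 𝒳] [MeasurableSingletonClass 𝒳]
  [MeasurableSpace 𝒴] [MeasurableSingletonClass 𝒴] [MeasurableSpace 𝒵] [MeasurableSingletonClass 𝒵]

theorem integral_eq_sum_measureReal_mul_integral_cond [IsFiniteMeasure μ] (hY : Measurable Y)
    {f : Ω → ℝ} (hf : Integrable f μ) :
    ∫ ω, f ω ∂μ = ∑ y, μ.real (Y ⁻¹' {y}) * ∫ ω, f ω ∂μ[|Y ⁻¹' {y}] := by
  have hf' (y : 𝒴) : Integrable f (μ (Y ⁻¹' {y}) • μ[|Y ⁻¹' {y}]) := by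
    refine hf.mono_measure ?_
    conv_rhs => rw [← sum_meas_smul_cond_fiber hY μ]
    exact Finset.single_le_sum (f := fun y ↦ μ (Y ⁻¹' {y}) • μ[|Y ⁻¹' {y}])
      (fun _ _ ↦ Measure.zero_le _) (Finset.mem_univ y)
  conv_lhs => rw [← sum_meas_smul_cond_fiber hY μ]
  rw [integral_finsetSum_measure fun y _ ↦ hf' y]
  simp only [integral_smul_measure, smul_eq_mul, Measure.real]

theorem entropy_prodMk_eq_add_condEntropy [IsFiniteMeasure μ] (hX : Measurable X)
    (hY : Measurable Y) :
    entropy μ (fun ω ↦ (Y ω, X ω)) = entropy μ Y + condEntropy μ X Y := by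
  have hjoint (y : 𝒴) (x : 𝒳) : μ.real ((fun ω ↦ (Y ω, X ω)) ⁻¹' {(y, x)}) =
      μ.real (Y ⁻¹' {y}) * (μ[|Y ⁻¹' {y}]).real (X ⁻¹' {x}) := by
    rw [mul_comm, measureReal_def, measureReal_def, measureReal_def, ← ENNReal.toReal_mul,
      cond_mul_eq_inter (hY (measurableSet_singleton y)), ← Set.singleton_prod_singleton,
      Set.mk_preimage_prod]
  rw [entropy_eq_sum_negMulLog, entropy_eq_sum_negMulLog, condEntropy, Fintype.sum_prod_type,
    ← Finset.sum_add_distrib]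
  refine Finset.sum_congr rfl fun y _ ↦ ?_
  simp only [hjoint, negMulLog_mul, Finset.sum_add_distrib, ← Finset.mul_sum, ← Finset.sum_mul,
    entropy_eq_sum_negMulLog]
  congr 1
  rcases eq_or_ne (μ (Y ⁻¹' {y})) 0 with h0 | h0
  · rw [measureReal_def, h0, ENNReal.toReal_zero, negMulLog_zero, mul_zero]
  · have := cond_isProbabilityMeasure h0
    rw [sum_measureReal_preimage_singleton _ fun x _ ↦ hX (measurableSet_singleton x),
      Finset.coe_univ, Set.preimage_univ, probReal_univ, one_mul]

theorem condMutualInfo_eq_condEntropy_sub [IsFiniteMeasure μ] (hX : Measurable X)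
    (hY : Measurable Y) (hZ : Measurable Z) :
    condMutualInfo μ X Y Z =
      condEntropy μ X Z - condEntropy μ X (fun ω ↦ (Y ω, Z ω)) := by
  have hsum : condMutualInfo μ X Y Z =
      condEntropy μ X Z + condEntropy μ Y Z - condEntropy μ (fun ω ↦ (X ω, Y ω)) Z := by
    simp only [condMutualInfo, mutualInfo, condEntropy, mul_sub, mul_add, Finset.sum_sub_distrib,
      Finset.sum_add_distrib]
  have hXYZ : entropy μ (fun ω ↦ (Z ω, (X ω, Y ω))) = entropy μ (fun ω ↦ ((Y ω, Z ω), X ω)) :=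
    entropy_equiv_comp (X := fun ω ↦ ((Y ω, Z ω), X ω))
      ⟨fun p ↦ (p.1.2, (p.2, p.1.1)), fun p ↦ ((p.2.2, p.1), p.2.1), fun _ ↦ rfl, fun _ ↦ rfl⟩
  have hYZ : entropy μ (fun ω ↦ (Z ω, Y ω)) = entropy μ (fun ω ↦ (Y ω, Z ω)) :=
    entropy_equiv_comp (X := fun ω ↦ (Y ω, Z ω)) (Equiv.prodComm _ _)
  have hchainY := entropy_prodMk_eq_add_condEntropy (μ := μ) hY hZ
  have hchainXY := entropy_prodMk_eq_add_condEntropy (μ := μ) (hX.prodMk hY) hZ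
  have hchainX := entropy_prodMk_eq_add_condEntropy (μ := μ) hX (hY.prodMk hZ)
  linarith

theorem entropy_eq_neg_integral_log [IsFiniteMeasure μ] (hX : Measurable X) :
    entropy μ X = -∫ x, log ((μ.map X).real {x}) ∂(μ.map X) := by
  rw [integral_fintype .of_finite, ← Finset.sum_neg_distrib]
  refine Finset.sum_congr rfl fun x _ ↦ ?_
  rw [smul_eq_mul, map_measureReal_apply hX (measurableSet_singleton x), ← neg_mul]
  rfl

theorem toReal_klDiv_map_prodMk_eq_mutualInfo [IsProbabilityMeasure μ] (hX : Measurable X)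
    (hY : Measurable Y) :
    (klDiv (μ.map fun ω ↦ (X ω, Y ω)) ((μ.map X).prod (μ.map Y))).toReal = mutualInfo μ X Y := by
  have := Measure.isProbabilityMeasure_map (μ := μ) hX.aemeasurable
  have := Measure.isProbabilityMeasure_map (μ := μ) hY.aemeasurable
  have := Measure.isProbabilityMeasure_map (μ := μ) (hX.prodMk hY).aemeasurable
  have hac := map_prodMk_absolutelyContinuous_prod (μ := μ) hX hY
  have hllr := llr_map_prodMk_prod_ae_eq (μ := μ) hX hY
  set P := μ.map fun ω ↦ (X ω, Y ω)
  have hPX : P.map Prod.fst = μ.map X := Measure.fst_map_prodMk hY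
  have hPY : P.map Prod.snd = μ.map Y := Measure.snd_map_prodMk hX
  have hintX : ∫ z, log ((μ.map X).real {z.1}) ∂P = -entropy μ X := by
    rw [entropy_eq_neg_integral_log hX, neg_neg, ← hPX,
      integral_map measurable_fst.aemeasurable (measurable_of_finite _).aestronglyMeasurable]
  have hintY : ∫ z, log ((μ.map Y).real {z.2}) ∂P = -entropy μ Y := by
    rw [entropy_eq_neg_integral_log hY, neg_neg, ← hPY,
      integral_map measurable_snd.aemeasurable (measurable_of_finite _).aestronglyMeasurable]
  rw [toReal_klDiv_of_measure_eq hac (by simp only [measure_univ]), integral_congr_ae hllr,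
    integral_sub .of_finite .of_finite, integral_sub .of_finite .of_finite, hintX, hintY,
    mutualInfo, entropy_eq_neg_integral_log (hX.prodMk hY)]
  ring

theorem sq_integral_sub_integral_prod_le_mutualInfo [IsProbabilityMeasure μ] (hX : Measurable X)
    (hY : Measurable Y) {f : 𝒳 × 𝒴 → ℝ} {a b : ℝ} (hf : ∀ z, f z ∈ Set.Icc a b) :
    (∫ ω, f (X ω, Y ω) ∂μ - ∫ z, f z ∂((μ.map X).prod (μ.map Y))) ^ 2 ≤
      (b - a) ^ 2 / 2 * mutualInfo μ X Y := by
  have := Measure.isProbabilityMeasure_map (μ := μ) hX.aemeasurable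
  have := Measure.isProbabilityMeasure_map (μ := μ) hY.aemeasurable
  have := Measure.isProbabilityMeasure_map (μ := μ) (hX.prodMk hY).aemeasurable
  have hac := map_prodMk_absolutelyContinuous_prod (μ := μ) hX hY
  rw [← toReal_klDiv_map_prodMk_eq_mutualInfo hX hY,
    ← integral_map (hX.prodMk hY).aemeasurable (measurable_of_finite f).aestronglyMeasurable]
  exact sq_integral_sub_integral_le_toReal_klDiv (klDiv_ne_top hac .of_finite)
    (measurable_of_finite f) hf

end Entropy

section InformationRatio

variable {Ω 𝒳 𝒴 𝒲 : Type*}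

/-- The history `(W 0, …, W (t - 1))` of a sequence of observations `W` before time `t`. -/
def history (W : ℕ → Ω → 𝒲) (t : ℕ) (ω : Ω) : Fin t → 𝒲 :=
  fun s ↦ W s ω

theorem snocEquiv_history (W : ℕ → Ω → 𝒲) (t : ℕ) (ω : Ω) :
    Fin.snocEquiv (fun _ ↦ 𝒲) (W t ω, history W t ω) = history W (t + 1) ω := by
  funext s
  refine Fin.lastCases ?_ (fun i ↦ ?_) s
  · exact Fin.snoc_last (α := fun _ ↦ 𝒲) _ _
  · exact Fin.snoc_castSucc (α := fun _ ↦ 𝒲) ..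

variable [MeasurableSpace Ω] {μ : Measure Ω}

theorem measurable_history [MeasurableSpace 𝒲] {W : ℕ → Ω → 𝒲} (hW : ∀ t, Measurable (W t))
    (t : ℕ) : Measurable (history W t) :=
  measurable_pi_lambda _ fun s ↦ hW s

variable [Fintype 𝒳] [Fintype 𝒲]

theorem sq_integral_le_mul_condMutualInfo [Fintype 𝒴] [MeasurableSpace 𝒴]
    [MeasurableSingletonClass 𝒴] [IsProbabilityMeasure μ] {X : Ω → 𝒳} {W : Ω → 𝒲} {Y : Ω → 𝒴}
    (hY : Measurable Y) {Δ : Ω → ℝ} (hΔ : Integrable Δ μ) {Γ : ℝ}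
    (hratio : ∀ y, μ (Y ⁻¹' {y}) ≠ 0 →
      (∫ ω, Δ ω ∂μ[|Y ⁻¹' {y}]) ^ 2 ≤ Γ * mutualInfo μ[|Y ⁻¹' {y}] X W) :
    (∫ ω, Δ ω ∂μ) ^ 2 ≤ Γ * condMutualInfo μ X W Y := by
  set P : 𝒴 → ℝ := fun y ↦ μ.real (Y ⁻¹' {y})
  set I : 𝒴 → ℝ := fun y ↦ mutualInfo μ[|Y ⁻¹' {y}] X W
  have hP : ∀ y, 0 ≤ P y := fun y ↦ measureReal_nonneg
  have hsumP : ∑ y, P y = 1 := by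
    rw [sum_measureReal_preimage_singleton _ fun y _ ↦ hY (measurableSet_singleton y),
      Finset.coe_univ, Set.preimage_univ, probReal_univ]
  have hterm (y : 𝒴) : P y * (∫ ω, Δ ω ∂μ[|Y ⁻¹' {y}]) ^ 2 ≤ P y * (Γ * I y) := by
    rcases eq_or_ne (μ (Y ⁻¹' {y})) 0 with h0 | h0
    · simp only [P, measureReal_def, h0, ENNReal.toReal_zero, zero_mul, le_refl]
    · exact mul_le_mul_of_nonneg_left (hratio y h0) (hP y)
  calc (∫ ω, Δ ω ∂μ) ^ 2
      = (∑ y, P y * ∫ ω, Δ ω ∂μ[|Y ⁻¹' {y}]) ^ 2 := by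
        rw [integral_eq_sum_measureReal_mul_integral_cond hY hΔ]
    _ ≤ ∑ y, P y * (∫ ω, Δ ω ∂μ[|Y ⁻¹' {y}]) ^ 2 :=
        (even_two.convexOn_pow (𝕜 := ℝ)).map_sum_le (fun y _ ↦ hP y) hsumP fun _ _ ↦ Set.mem_univ _
    _ ≤ ∑ y, P y * (Γ * I y) := Finset.sum_le_sum fun y _ ↦ hterm y
    _ = Γ * condMutualInfo μ X W Y := by
        simp only [condMutualInfo, Finset.mul_sum, mul_left_comm, P, I]

variable [MeasurableSpace 𝒳] [MeasurableSingletonClass 𝒳] [MeasurableSpace 𝒲]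
  [MeasurableSingletonClass 𝒲]

theorem sum_condMutualInfo_history_le_entropy [IsProbabilityMeasure μ] {X : Ω → 𝒳}
    (hX : Measurable X) {W : ℕ → Ω → 𝒲} (hW : ∀ t, Measurable (W t)) (T : ℕ) :
    ∑ t ∈ Finset.range T, condMutualInfo μ X (W t) (history W t) ≤ entropy μ X := by
  have hstep (t : ℕ) : condMutualInfo μ X (W t) (history W t) =
      condEntropy μ X (history W t) - condEntropy μ X (history W (t + 1)) := by
    rw [condMutualInfo_eq_condEntropy_sub hX (hW t) (measurable_history hW t),
      ← condEntropy_equiv_comp_right (Y := fun ω ↦ (W t ω, history W t ω))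
        (Fin.snocEquiv fun _ ↦ 𝒲)]
    simp only [snocEquiv_history]
  calc ∑ t ∈ Finset.range T, condMutualInfo μ X (W t) (history W t)
      = condEntropy μ X (history W 0) - condEntropy μ X (history W T) := by
        rw [Finset.sum_congr rfl fun t _ ↦ hstep t,
          Finset.sum_range_sub' fun t ↦ condEntropy μ X (history W t)]
    _ ≤ condEntropy μ X (history W 0) := sub_le_self _ condEntropy_nonneg
    _ = entropy μ X := condEntropy_of_unique

theorem sum_integral_le_sqrt_of_sq_integral_cond_le [IsProbabilityMeasure μ] {X : Ω → 𝒳}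
    (hX : Measurable X) {W : ℕ → Ω → 𝒲} (hW : ∀ t, Measurable (W t)) {Δ : ℕ → Ω → ℝ}
    (hΔ : ∀ t, Integrable (Δ t) μ) {Γ : ℝ} (hΓ : 0 ≤ Γ)
    (hratio : ∀ t h, μ (history W t ⁻¹' {h}) ≠ 0 →
      (∫ ω, Δ t ω ∂μ[|history W t ⁻¹' {h}]) ^ 2 ≤
        Γ * mutualInfo μ[|history W t ⁻¹' {h}] X (W t)) (T : ℕ) :
    ∑ t ∈ Finset.range T, ∫ ω, Δ t ω ∂μ ≤ √(Γ * entropy μ X * T) := by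
  refine le_sqrt_of_sq_le ?_
  calc (∑ t ∈ Finset.range T, ∫ ω, Δ t ω ∂μ) ^ 2
      ≤ T * ∑ t ∈ Finset.range T, (∫ ω, Δ t ω ∂μ) ^ 2 := by
        simpa only [Finset.card_range] using
          sq_sum_le_card_mul_sum_sq (s := Finset.range T) (f := fun t ↦ ∫ ω, Δ t ω ∂μ)
    _ ≤ T * ∑ t ∈ Finset.range T, Γ * condMutualInfo μ X (W t) (history W t) := by
        gcongr with t
        exact sq_integral_le_mul_condMutualInfo (measurable_history hW t) (hΔ t) (hratio t)
    _ ≤ T * (Γ * entropy μ X) := by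
        rw [← Finset.mul_sum]
        gcongr
        exact sum_condMutualInfo_history_le_entropy hX hW T
    _ = Γ * entropy μ X * T := mul_comm _ _

end InformationRatio

section FullInformation

theorem identDistrib_of_forall_measure_eq {Ω Ω' α : Type*} [MeasurableSpace Ω]
    [MeasurableSpace Ω'] {μ : Measure Ω} {ν : Measure Ω'} [Countable α] [MeasurableSpace α]
    [MeasurableSingletonClass α] {X : Ω → α} {Y : Ω' → α} (hX : Measurable X) (hY : Measurable Y)
    (h : ∀ a, μ {ω | X ω = a} = ν {ω | Y ω = a}) : IdentDistrib X Y μ ν where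
  aemeasurable_fst := hX.aemeasurable
  aemeasurable_snd := hY.aemeasurable
  map_eq := Measure.ext_of_singleton fun a ↦ by
    rw [Measure.map_apply hX (measurableSet_singleton a),
      Measure.map_apply hY (measurableSet_singleton a)]
    exact h a

variable {Ω 𝒜 𝒵 : Type*} [MeasurableSpace Ω] {μ : Measure Ω} [IsProbabilityMeasure μ]
  [Fintype 𝒜] [MeasurableSpace 𝒜] [MeasurableSingletonClass 𝒜]
  [MeasurableSpace 𝒵] [MeasurableSingletonClass 𝒵]

theorem sq_integral_sub_le_mutualInfo_of_identDistrib_of_indepFun [Fintype 𝒵]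
    {X A : Ω → 𝒜} {Z : Ω → 𝒵} (hX : Measurable X) (hA : Measurable A) (hZ : Measurable Z)
    (hAX : IdentDistrib A X μ μ) (hAZ : A ⟂ᵢ[μ] Z) {f : 𝒜 × 𝒵 → ℝ} {a b : ℝ}
    (hf : ∀ y, f y ∈ Set.Icc a b) :
    (∫ ω, (f (X ω, Z ω) - f (A ω, Z ω)) ∂μ) ^ 2 ≤
      (b - a) ^ 2 / 2 * mutualInfo μ X (fun ω ↦ (A ω, Z ω)) := by
  have hAZm := hA.prodMk hZ
  have := Measure.isProbabilityMeasure_map (μ := μ) hX.aemeasurable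
  have := Measure.isProbabilityMeasure_map (μ := μ) hAZm.aemeasurable
  have hfm := measurable_of_finite f
  have hmap : ((μ.map X).prod (μ.map fun ω ↦ (A ω, Z ω))).map (Prod.map id Prod.snd) =
      μ.map fun ω ↦ (A ω, Z ω) := by
    rw [← Measure.map_prod_map _ _ measurable_id measurable_snd, Measure.map_id,
      ← Measure.snd, Measure.snd_map_prodMk hA, ← hAX.map_eq,
      hAZ.map_prod_eq_prod_map_map hA.aemeasurable hZ.aemeasurable]
  have hregret : ∫ ω, f (A ω, Z ω) ∂μ =
      ∫ p, f (p.1, p.2.2) ∂((μ.map X).prod (μ.map fun ω ↦ (A ω, Z ω))) := by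
    rw [← integral_map hAZm.aemeasurable hfm.aestronglyMeasurable]
    conv_lhs => rw [← hmap]
    exact integral_map (measurable_of_finite _).aemeasurable hfm.aestronglyMeasurable
  have hint {V : Ω → 𝒜 × 𝒵} (hV : Measurable V) : Integrable (fun ω ↦ f (V ω)) μ :=
    .of_mem_Icc a b (hfm.comp hV).aemeasurable (.of_forall fun ω ↦ hf _)
  rw [integral_sub (hint (hX.prodMk hZ)) (hint hAZm), hregret]
  exact sq_integral_sub_integral_prod_le_mutualInfo (f := fun p ↦ f (p.1, p.2.2)) hX hAZm
    fun _ ↦ hf _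

theorem thompson_sampling_regret_le_full_information_general [Finite 𝒵]
    {R : 𝒜 × 𝒵 → ℝ} (hR : (⨆ y, R y) - (⨅ y, R y) ≤ 1)
    {Z : ℕ → Ω → 𝒵} (hZ : ∀ t, Measurable (Z t)) {Astar : Ω → 𝒜} (hAstar : Measurable Astar)
    {A : ℕ → Ω → 𝒜} (hA : ∀ t, Measurable (A t))
    (hTS : ∀ t h, μ (history (fun s ω ↦ (A s ω, Z s ω)) t ⁻¹' {h}) ≠ 0 →
      IdentDistrib (A t) Astar μ[|history (fun s ω ↦ (A s ω, Z s ω)) t ⁻¹' {h}]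
          μ[|history (fun s ω ↦ (A s ω, Z s ω)) t ⁻¹' {h}] ∧
        IndepFun (A t) (Z t) μ[|history (fun s ω ↦ (A s ω, Z s ω)) t ⁻¹' {h}])
    (T : ℕ) :
    ∑ t ∈ Finset.range T, ∫ ω, (R (Astar ω, Z t ω) - R (A t ω, Z t ω)) ∂μ ≤
      √(entropy μ Astar * T / 2) := by
  have := Fintype.ofFinite 𝒵
  have hRm := measurable_of_finite R
  have hRmem (y : 𝒜 × 𝒵) : R y ∈ Set.Icc (⨅ y, R y) ((⨅ y, R y) + 1) :=
    ⟨ciInf_le (Set.finite_range R).bddBelow y,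
      (le_ciSup (Set.finite_range R).bddAbove y).trans (by linarith)⟩
  have hint {V : Ω → 𝒜 × 𝒵} (hV : Measurable V) : Integrable (fun ω ↦ R (V ω)) μ :=
    .of_mem_Icc _ _ (hRm.comp hV).aemeasurable (.of_forall fun ω ↦ hRmem _)
  rw [show entropy μ Astar * T / 2 = 1 / 2 * entropy μ Astar * T by ring]
  refine sum_integral_le_sqrt_of_sq_integral_cond_le
    (Δ := fun t ω ↦ R (Astar ω, Z t ω) - R (A t ω, Z t ω)) hAstar
    (fun t ↦ (hA t).prodMk (hZ t))
    (fun t ↦ (hint (hAstar.prodMk (hZ t))).sub (hint ((hA t).prodMk (hZ t)))) (by norm_num)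
    (fun t h hh ↦ ?_) T
  have := cond_isProbabilityMeasure hh
  obtain ⟨hident, hindep⟩ := hTS t h hh
  simpa only [add_sub_cancel_left, one_pow] using
    sq_integral_sub_le_mutualInfo_of_identDistrib_of_indepFun hAstar (hA t) (hZ t) hident hindep
      hRmem

end FullInformation

/-- **Full-information regret bound for Thompson sampling**: combining
Proposition 1 with Proposition 4 yields, when `𝒴 = 𝒜 × 𝒵` and
`Y_{t,a} = (a, Z_t)` (full information),
`Σ_{t<T} E[R(Y_{t,A*}) − R(Y_{t,A_t})] ≤ √(H(A*) · T / 2)`. -/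
theorem thompson_sampling_regret_le_full_information
    {Ω : Type*} [MeasurableSpace Ω] (μ : Measure Ω) [IsProbabilityMeasure μ]
    {𝒜 𝒵 Θ : Type*} [Fintype 𝒜] [Nonempty 𝒜] [Fintype 𝒵] [Nonempty 𝒵]
    [Fintype Θ] [Nonempty Θ]
    [MeasurableSpace 𝒜] [MeasurableSingletonClass 𝒜]
    [MeasurableSpace 𝒵] [MeasurableSingletonClass 𝒵]
    [MeasurableSpace Θ] [MeasurableSingletonClass Θ]
    (R : 𝒜 × 𝒵 → ℝ) (hR : (⨆ y, R y) - (⨅ y, R y) ≤ 1)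
    (θstar : Ω → Θ) (hθstarMeas : Measurable θstar)
    (p : Θ → PMF (𝒜 → 𝒜 × 𝒵))
    (Y : ℕ → 𝒜 → Ω → 𝒜 × 𝒵) (hYmeas : ∀ t a, Measurable (Y t a))
    -- full information: a single random outcome `Z_t` is revealed whatever the action
    (Z : ℕ → Ω → 𝒵) (hfull : ∀ t a ω, Y t a ω = (a, Z t ω))
    -- conditionally i.i.d. given `θ*`, with conditional law `p θ*`
    (hiid : ∀ θ : Θ, μ {ω | θstar ω = θ} ≠ 0 →
      ∀ (s : Finset ℕ) (f : ℕ → 𝒜 → 𝒜 × 𝒵),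
        (μ[|{ω | θstar ω = θ}]) {ω | ∀ t ∈ s, (fun a => Y t a ω) = f t} =
          ∏ t ∈ s, p θ (f t))
    (Astar : Ω → 𝒜)
    -- `A*` is `σ(θ*)`-measurable
    (hAstarFn : ∃ g : Θ → 𝒜, ∀ ω, Astar ω = g (θstar ω))
    -- `A*` maximizes `E[R(Y_{1,a}) | θ*]`
    (hopt : ∀ θ : Θ, μ {ω | θstar ω = θ} ≠ 0 → ∀ ω ∈ {ω | θstar ω = θ},
      ∀ a : 𝒜,
        ∫ ω', R (Y 0 a ω') ∂(μ[|{ω' | θstar ω' = θ}]) ≤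
          ∫ ω', R (Y 0 (Astar ω) ω') ∂(μ[|{ω' | θstar ω' = θ}]))
    (A : ℕ → Ω → 𝒜) (hAmeas : ∀ t, Measurable (A t))
    -- Thompson sampling: conditioned on every positive-probability history,
    -- `A_t` is independent of `(θ*, Y_t)` and distributed as `A*`
    (hTS : ∀ (t : ℕ) (h : Fin t → 𝒜 × (𝒜 × 𝒵)),
      μ {ω | ∀ s : Fin t,
          A (s : ℕ) ω = (h s).1 ∧ Y (s : ℕ) ((h s).1) ω = (h s).2} ≠ 0 →
        (∀ a : 𝒜,
          (μ[|{ω | ∀ s : Fin t,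
              A (s : ℕ) ω = (h s).1 ∧ Y (s : ℕ) ((h s).1) ω = (h s).2}])
              {ω | A t ω = a} =
            (μ[|{ω | ∀ s : Fin t,
                A (s : ℕ) ω = (h s).1 ∧ Y (s : ℕ) ((h s).1) ω = (h s).2}])
              {ω | Astar ω = a}) ∧
        IndepFun (A t) (fun ω => (θstar ω, fun a => Y t a ω))
          (μ[|{ω | ∀ s : Fin t,
              A (s : ℕ) ω = (h s).1 ∧ Y (s : ℕ) ((h s).1) ω = (h s).2}]))
    (T : ℕ) :
    ∑ t ∈ Finset.range T,
        ∫ ω, (R (Y t (Astar ω) ω) - R (Y t (A t ω) ω)) ∂μ ≤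
      Real.sqrt (entropy μ Astar * T / 2) := by
  obtain ⟨g, hg⟩ := hAstarFn
  obtain rfl : Astar = g ∘ θstar := funext hg
  let a₀ : 𝒜 := Classical.arbitrary 𝒜
  have hAstar : Measurable (g ∘ θstar) := (measurable_of_finite g).comp hθstarMeas
  have hZ (t : ℕ) : Measurable (Z t) := by
    simpa only [hfull] using (hYmeas t a₀).snd
  have hhistory (t : ℕ) (h : Fin t → 𝒜 × 𝒵) :
      {ω | ∀ s : Fin t, A s ω = (h s).1 ∧ Y s (h s).1 ω = h s} =
        history (fun s ω ↦ (A s ω, Z s ω)) t ⁻¹' {h} := by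
    ext ω
    simp [history, hfull, funext_iff, Prod.ext_iff]
  simp only [hfull]
  refine thompson_sampling_regret_le_full_information_general hR hZ hAstar hAmeas
    (fun t h hh ↦ ?_) T
  have hposterior := hTS t (fun s ↦ ((h s).1, h s))
  rw [hhistory] at hposterior
  obtain ⟨hprob, hindep⟩ := hposterior hh
  refine ⟨identDistrib_of_forall_measure_eq (hAmeas t) hAstar hprob, ?_⟩
  simpa only [Function.comp_def, id, hfull] using hindep.comp measurable_id
    ((measurable_pi_apply a₀).comp measurable_snd).snd
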